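/- For each α ∈ [0,2) there exists a constant C > 0 with the following property: for every N ≥ 1 and every smooth vector field u : ℝ² → ℝ² that is 2π-periodic in each coordinate and mean-free (∫_Ω u dx = 0), one has | ∫_Ω ( ((I − P_N)u)·∇ u )·u dx | ≤ C N^{−(2−α)} ‖Δu‖²_{L²(Ω)} ‖u‖_{Ḣ^{−α}}. -/

import Mathlib

/-!
Write `g = ½|u|²`. The integrand `(((I - P_N)u)·∇u)·u` equals `((I - P_N)u)·∇g`, so by Parseval's
identity the integral is at most a constant times `∑_{|k|>N} |û_k| |k| |ĝ_k|` (`parseval_high`).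

The coefficient `ĝ_k` is a convolution of coefficients of `u`. In each product `û_p û_q` with
`p + q = k` the larger of `|p|`, `|q|` is at least `|k|/2`, and giving it the `Ḣ²` weight and the
other one the `Ḣ^{-α}` weight yields `|ĝ_k| ≲ |k|^{α-2} ‖Δu‖ ‖u‖_{Ḣ^{-α}}` (`conv_bound`,
`norm_fc_energy_le`). Here the mean-free condition removes the zero mode.

It remains to bound `∑_{|k|>N} (|k|² |û_k|) |k|^{α-3}` (`high_sum_bound`). By Cauchy–Schwarz it is
at most `‖Δu‖` times the square root of the lattice tail `∑_{|k|>N} |k|^{2α-6} ≲ N^{2α-4}`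
(`tail_bound`), which converges because `α < 2`.

Parseval's identity on the box is transferred from Mathlib's Fourier basis of `L²((ℝ/ℤ)²)` along the
map `rep` from the torus to the box.
-/

open Real MeasureTheory Set intervalIntegral
open scoped Real Classical

noncomputable section

/-- Partial derivative in the first spatial coordinate. -/
def pd1 (f : ℝ × ℝ → ℝ) (x : ℝ × ℝ) : ℝ := deriv (fun s => f (s, x.2)) x.1

/-- Partial derivative in the second spatial coordinate. -/
def pd2 (f : ℝ × ℝ → ℝ) (x : ℝ × ℝ) : ℝ := deriv (fun s => f (x.1, s)) x.2

/-- Advective derivative `(v·∇)f = v¹ ∂₁f + v² ∂₂f`. -/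
def adv (v : ℝ × ℝ → ℝ × ℝ) (f : ℝ × ℝ → ℝ) (x : ℝ × ℝ) : ℝ :=
  (v x).1 * pd1 f x + (v x).2 * pd2 f x

/-- Divergence `∇·v = ∂₁v¹ + ∂₂v²`. -/
def divg (v : ℝ × ℝ → ℝ × ℝ) (x : ℝ × ℝ) : ℝ :=
  pd1 (fun y => (v y).1) x + pd2 (fun y => (v y).2) x

/-- Scalar curl `∇⊥·v = ∂₁v² − ∂₂v¹`. -/
def curl2 (v : ℝ × ℝ → ℝ × ℝ) (x : ℝ × ℝ) : ℝ :=
  pd1 (fun y => (v y).2) x - pd2 (fun y => (v y).1) x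

/-- Laplacian `Δf = ∂₁²f + ∂₂²f`. -/
def lap (f : ℝ × ℝ → ℝ) : ℝ × ℝ → ℝ := fun x => pd1 (pd1 f) x + pd2 (pd2 f) x

/-- `|∇v|² = Σ_{i,j} (∂ᵢvʲ)²`. -/
def gradNormSq (v : ℝ × ℝ → ℝ × ℝ) (x : ℝ × ℝ) : ℝ :=
  (pd1 (fun y => (v y).1) x)^2 + (pd2 (fun y => (v y).1) x)^2 +
  (pd1 (fun y => (v y).2) x)^2 + (pd2 (fun y => (v y).2) x)^2

/-- The periodic box `Ω = [0,2π]²`. -/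
def Omega2 : Set (ℝ × ℝ) := Set.Icc (0:ℝ) (2*π) ×ˢ Set.Icc (0:ℝ) (2*π)

/-- `2π`-periodicity in each coordinate for a vector field. -/
def Periodic2 (f : ℝ × ℝ → ℝ × ℝ) : Prop :=
  ∀ x : ℝ × ℝ, f (x.1 + 2*π, x.2) = f x ∧ f (x.1, x.2 + 2*π) = f x

/-- Squared `L²(Ω)` norm of a vector field. -/
def l2sq (v : ℝ × ℝ → ℝ × ℝ) : ℝ := ∫ x in Omega2, ((v x).1^2 + (v x).2^2)

/-- Squared `L²(Ω)` norm of `Δv`. -/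
def l2sqLap (v : ℝ × ℝ → ℝ × ℝ) : ℝ :=
  ∫ x in Omega2, ((lap (fun y => (v y).1) x)^2 + (lap (fun y => (v y).2) x)^2)

/-- `ℓ`-th Fourier coefficient of a scalar field. -/
def fc (f : ℝ × ℝ → ℝ) (ℓ : ℤ × ℤ) : ℂ :=
  ((2*π)^2)⁻¹ • ∫ x in Omega2,
    (f x : ℂ) * Complex.exp (-(Complex.I) * ((ℓ.1:ℂ) * (x.1:ℂ) + (ℓ.2:ℂ) * (x.2:ℂ)))

/-- `ℓ`-th Fourier coefficient of a vector field. -/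
def fcVec (v : ℝ × ℝ → ℝ × ℝ) (ℓ : ℤ × ℤ) : ℂ × ℂ :=
  (fc (fun y => (v y).1) ℓ, fc (fun y => (v y).2) ℓ)

/-- `|v̂_ℓ|²`. -/
def coefAbsSq (v : ℝ × ℝ → ℝ × ℝ) (ℓ : ℤ × ℤ) : ℝ :=
  ‖fc (fun y => (v y).1) ℓ‖^2 + ‖fc (fun y => (v y).2) ℓ‖^2

/-- Squared homogeneous Sobolev norm `‖v‖²_{Ḣ^κ} = (2π)² Σ_{ℓ≠0} |ℓ|^{2κ}|v̂_ℓ|²`. -/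
def hnormSq (v : ℝ × ℝ → ℝ × ℝ) (κ : ℝ) : ℝ :=
  (2*π)^2 * ∑' ℓ : ℤ × ℤ,
    if ℓ = 0 then 0 else ((ℓ.1:ℝ)^2 + (ℓ.2:ℝ)^2) ^ κ * coefAbsSq v ℓ

/-- Homogeneous Sobolev norm `‖v‖_{Ḣ^κ}`. -/
def hnorm (v : ℝ × ℝ → ℝ × ℝ) (κ : ℝ) : ℝ := Real.sqrt (hnormSq v κ)

/-- Projection onto Fourier modes with `|ℓ| ≤ N` (scalar fields). -/
def PN (N : ℝ) (f : ℝ × ℝ → ℝ) (x : ℝ × ℝ) : ℝ :=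
  ∑' ℓ : ℤ × ℤ,
    if ((ℓ.1:ℝ)^2 + (ℓ.2:ℝ)^2) ≤ N^2 then
      (fc f ℓ * Complex.exp (Complex.I * ((ℓ.1:ℂ) * (x.1:ℂ) + (ℓ.2:ℂ) * (x.2:ℂ)))).re
    else 0

/-- Projection onto Fourier modes with `|ℓ| ≤ N` (vector fields). -/
def PNvec (N : ℝ) (v : ℝ × ℝ → ℝ × ℝ) (x : ℝ × ℝ) : ℝ × ℝ :=
  (PN N (fun y => (v y).1) x, PN N (fun y => (v y).2) x)

/-- High-mode part `(I − P_N)v`. -/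
def highN (N : ℝ) (v : ℝ × ℝ → ℝ × ℝ) (x : ℝ × ℝ) : ℝ × ℝ := v x - PNvec N v x

/-- `(v·∇)w` as a vector field. -/
def advVec (v w : ℝ × ℝ → ℝ × ℝ) (x : ℝ × ℝ) : ℝ × ℝ :=
  (adv v (fun y => (w y).1) x, adv v (fun y => (w y).2) x)

/-- Laplacian of a vector field. -/
def lapVec (v : ℝ × ℝ → ℝ × ℝ) (x : ℝ × ℝ) : ℝ × ℝ :=
  (lap (fun y => (v y).1) x, lap (fun y => (v y).2) x)

/-- Spatial mean `(2π)⁻² ∫_Ω v`. -/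
def meanOf (v : ℝ × ℝ → ℝ × ℝ) : ℝ × ℝ := ((2*π)^2)⁻¹ • ∫ x in Omega2, v x

/-- Joint smoothness in `(t,x)`. -/
def SmoothTS (u : ℝ → ℝ × ℝ → ℝ × ℝ) : Prop :=
  ∀ n : ℕ, ContDiff ℝ n (fun p : ℝ × (ℝ × ℝ) => u p.1 p.2)

/-- The 2D inviscid Burgers equation `∂ₜu + (u·∇)u = 0` on `[0,T] × ℝ²`. -/
def IsBurgers (T : ℝ) (u : ℝ → ℝ × ℝ → ℝ × ℝ) : Prop :=
  ∀ t ∈ Set.Icc (0:ℝ) T, ∀ x : ℝ × ℝ,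
    deriv (fun s => (u s x).1) t + adv (u t) (fun y => (u t y).1) x = 0 ∧
    deriv (fun s => (u s x).2) t + adv (u t) (fun y => (u t y).2) x = 0

/-- The 2D Kuramoto–Sivashinsky equation `∂ₜu + (u·∇)u = −Δ²u − λΔu` on `[0,T] × ℝ²`. -/
def IsKSE (lam T : ℝ) (u : ℝ → ℝ × ℝ → ℝ × ℝ) : Prop :=
  ∀ t ∈ Set.Icc (0:ℝ) T, ∀ x : ℝ × ℝ,
    deriv (fun s => (u s x).1) t + adv (u t) (fun y => (u t y).1) x
      = -(lap (lap (fun y => (u t y).1)) x) - lam * lap (fun y => (u t y).1) x ∧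
    deriv (fun s => (u s x).2) t + adv (u t) (fun y => (u t y).2) x
      = -(lap (lap (fun y => (u t y).2)) x) - lam * lap (fun y => (u t y).2) x

/-! ### Parseval's identity on the box -/

/-- Fourier mode `e^{iℓ·x}`. -/
def ee (ℓ : ℤ × ℤ) (x : ℝ × ℝ) : ℂ :=
  Complex.exp (Complex.I * ((ℓ.1:ℂ) * (x.1:ℂ) + (ℓ.2:ℂ) * (x.2:ℂ)))

/-- `ℓ`-th Fourier coefficient of a complex-valued function on the box. -/
def cf (f : ℝ × ℝ → ℂ) (ℓ : ℤ × ℤ) : ℂ :=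
  ((2*π)^2)⁻¹ • ∫ x in Omega2, f x * ee (-ℓ) x

lemma continuous_ee (ℓ : ℤ × ℤ) : Continuous (ee ℓ) := by
  unfold ee; fun_prop

lemma ee_add (k l : ℤ × ℤ) (x : ℝ × ℝ) : ee (k + l) x = ee k x * ee l x := by
  simp only [ee, ← Complex.exp_add]; congr 1; push_cast [Prod.fst_add, Prod.snd_add]; ring

lemma conj_ee (k : ℤ × ℤ) (x : ℝ × ℝ) : (starRingEnd ℂ) (ee k x) = ee (-k) x := by
  simp only [ee, ← Complex.exp_conj]; congr 1; simp; ring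

lemma fc_eq_cf (f : ℝ × ℝ → ℝ) (ℓ : ℤ × ℤ) : fc f ℓ = cf (fun x => (f x : ℂ)) ℓ := by
  simp only [fc, cf, ee]; congr 2; ext x; congr 2; simp; ring

lemma integrableOn_Omega2 {E : Type*} [NormedAddCommGroup E] {f : ℝ × ℝ → E}
    (hf : Continuous f) : IntegrableOn f Omega2 :=
  hf.continuousOn.integrableOn_compact (isCompact_Icc.prod isCompact_Icc)

section Torus

local instance : MeasureSpace UnitAddCircle := ⟨AddCircle.haarAddCircle⟩

local instance : IsProbabilityMeasure (volume : Measure UnitAddCircle) :=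
  inferInstanceAs (IsProbabilityMeasure AddCircle.haarAddCircle)

/-- The representative in `(0,2π]²` of a point of the torus `(ℝ/ℤ)²`, rescaled by `2π`. -/
def rep (y : UnitAddTorus (Fin 2)) : ℝ × ℝ :=
  (2*π*(AddCircle.equivIoc 1 0 (y 0) : ℝ), 2*π*(AddCircle.equivIoc 1 0 (y 1) : ℝ))

lemma measurable_rep : Measurable rep := by
  have h : Measurable (fun z : UnitAddCircle => ((AddCircle.equivIoc 1 0 z : Ioc (0:ℝ) (0+1)) : ℝ)) :=
    measurable_subtype_coe.comp (AddCircle.measurableEquivIoc 1 0).measurable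
  have h' (i : Fin 2) : Measurable (fun y : UnitAddTorus (Fin 2) =>
      2*π*((AddCircle.equivIoc 1 0 (y i) : Ioc (0:ℝ) (0+1)) : ℝ)) :=
    (h.comp (measurable_pi_apply i)).const_mul _
  exact (h' 0).prodMk (h' 1)

lemma rep_mem (y : UnitAddTorus (Fin 2)) : rep y ∈ Omega2 := by
  have h0 := (AddCircle.equivIoc 1 0 (y 0)).2
  have h1 := (AddCircle.equivIoc 1 0 (y 1)).2
  simp only [mem_Ioc, zero_add] at h0 h1
  have := Real.pi_pos
  refine ⟨⟨?_, ?_⟩, ⟨?_, ?_⟩⟩ <;> simp only [rep] <;> nlinarith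

lemma rep_coe (x : Fin 2 → ℝ) (hx : ∀ i, x i ∈ Ioc (0:ℝ) (0 + 1)) :
    rep (fun i => (x i : UnitAddCircle)) = (2*π) • (x 0, x 1) := by
  have h (i) : ((AddCircle.equivIoc 1 0 (x i : UnitAddCircle) : Ioc (0:ℝ) (0+1)) : ℝ) = x i := by
    have := (AddCircle.equivIoc (1:ℝ) 0).apply_symm_apply ⟨x i, hx i⟩
    exact congrArg Subtype.val this
  simp only [rep, h]; rfl

open Pointwise in
/-- Integrals over the torus are averages over the box. -/
lemma integral_rep (f : ℝ × ℝ → ℂ) :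
    ∫ y : UnitAddTorus (Fin 2), f (rep y) = ((2*π)^2)⁻¹ • ∫ x in Omega2, f x := by
  rw [UnitAddTorus.integral_preimage _ (fun _ => 0)]
  have hs : MeasurableSet {x : Fin 2 → ℝ | ∀ i, x i ∈ Ioc (0:ℝ) (0 + 1)} :=
    MeasurableSet.univ_pi' fun i => measurableSet_Ioc
  rw [setIntegral_congr_fun hs (g := fun x => f ((2*π) • (x 0, x 1)))
    (fun x hx => by simp only [rep_coe x hx])]
  have h1 : ∫ x in {x : Fin 2 → ℝ | ∀ i, x i ∈ Ioc (0:ℝ) (0 + 1)}, f ((2*π) • (x 0, x 1))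
      = ∫ x in (Ioc (0:ℝ) 1 ×ˢ Ioc (0:ℝ) 1), f ((2*π) • x) := by
    rw [← (volume_preserving_finTwoArrow ℝ).setIntegral_preimage_emb
      (MeasurableEquiv.finTwoArrow).measurableEmbedding]
    simp only [MeasurableEquiv.finTwoArrow, MeasurableEquiv.piFinTwo]
    congr 2
    ext x
    simp [Fin.forall_fin_two]
  have h0 := Measure.setIntegral_comp_smul (volume : Measure (ℝ × ℝ)) f (R := 2*π)
    (Ioc (0:ℝ) 1 ×ˢ Ioc (0:ℝ) 1) (by positivity)
  rw [h1, h0]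
  have h2 : (2*π) • (Ioc (0:ℝ) 1 ×ˢ Ioc (0:ℝ) 1) = Ioc (0:ℝ) (2*π) ×ˢ Ioc (0:ℝ) (2*π) := by
    ext x
    rw [Set.mem_smul_set_iff_inv_smul_mem₀ (by positivity)]
    have := Real.pi_pos
    simp only [mem_prod, Prod.smul_fst, Prod.smul_snd, mem_Ioc, smul_eq_mul]
    rw [inv_mul_le_iff₀ (by positivity), inv_mul_le_iff₀ (by positivity)]
    simp [Real.pi_pos]
  rw [h2]
  have h3 : (Ioc (0:ℝ) (2*π) ×ˢ Ioc (0:ℝ) (2*π) : Set (ℝ × ℝ)) =ᵐ[volume] Omega2 :=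
    Measure.set_prod_ae_eq Ioc_ae_eq_Icc Ioc_ae_eq_Icc
  rw [setIntegral_congr_set h3]
  congr 1
  simp [abs_of_pos Real.pi_pos]

lemma memLp_rep {f : ℝ × ℝ → ℂ} (hf : Continuous f) :
    MemLp (fun y => f (rep y)) 2 (volume : Measure (UnitAddTorus (Fin 2))) := by
  obtain ⟨C, hC⟩ := (isCompact_Icc.prod isCompact_Icc : IsCompact Omega2).exists_bound_of_continuousOn
    hf.continuousOn
  exact MemLp.of_bound (hf.measurable.comp measurable_rep).aestronglyMeasurable C
    (Filter.Eventually.of_forall fun y => hC _ (rep_mem y))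

lemma mFourier_eq (k : ℤ × ℤ) (y : UnitAddTorus (Fin 2)) :
    UnitAddTorus.mFourier (d := Fin 2) ![k.1, k.2] y = ee k (rep y) := by
  have h (i : Fin 2) (n : ℤ) : fourier n (y i) =
      Complex.exp (Complex.I * (n * (2*π*(AddCircle.equivIoc 1 0 (y i) : ℝ) : ℝ))) := by
    conv_lhs => rw [← (AddCircle.equivIoc (1:ℝ) 0).symm_apply_apply (y i)]
    refine (fourier_coe_apply (T := 1)).trans ?_
    congr 1; push_cast; ring
  simp only [UnitAddTorus.mFourier, ContinuousMap.coe_mk, Fin.prod_univ_two, h, ee, rep,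
    ← Complex.exp_add]
  congr 1; simp; ring

lemma mFourierCoeff_rep {f : ℝ × ℝ → ℂ} (hf : Continuous f) (k : ℤ × ℤ) :
    UnitAddTorus.mFourierCoeff ((memLp_rep hf).toLp) ![k.1, k.2] = cf f k := by
  rw [UnitAddTorus.mFourierCoeff, cf, ← integral_rep]
  apply MeasureTheory.integral_congr_ae
  filter_upwards [(memLp_rep hf).coeFn_toLp] with y hy
  rw [hy, ← mFourier_eq, smul_eq_mul, mul_comm]
  congr 2

lemma parseval_conj {f g : ℝ × ℝ → ℂ} (hf : Continuous f) (hg : Continuous g) :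
    HasSum (fun k => (starRingEnd ℂ) (cf f k) * cf g k)
      (((2*π)^2)⁻¹ • ∫ x in Omega2, (starRingEnd ℂ) (f x) * g x) := by
  have h := UnitAddTorus.hasSum_prod_mFourierCoeff (memLp_rep hf).toLp (memLp_rep hg).toLp
  rw [← (finTwoArrowEquiv ℤ).symm.hasSum_iff] at h
  simp only [Function.comp_def, finTwoArrowEquiv_symm_apply, mFourierCoeff_rep hf,
    mFourierCoeff_rep hg] at h
  convert h using 1
  rw [← integral_rep (fun x => (starRingEnd ℂ) (f x) * g x)]
  apply MeasureTheory.integral_congr_ae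
  filter_upwards [(memLp_rep hf).coeFn_toLp, (memLp_rep hg).coeFn_toLp] with y hy hy'
  rw [hy, hy']

end Torus

lemma cf_conj (f : ℝ × ℝ → ℂ) (k : ℤ × ℤ) :
    cf (fun x => (starRingEnd ℂ) (f x)) k = (starRingEnd ℂ) (cf f (-k)) := by
  simp only [cf, Complex.real_smul, map_mul, Complex.conj_ofReal, ← integral_conj, conj_ee, neg_neg]

/-- Parseval's identity in bilinear form. -/
lemma parseval {f g : ℝ × ℝ → ℂ} (hf : Continuous f) (hg : Continuous g) :
    HasSum (fun k => cf f (-k) * cf g k) (((2*π)^2)⁻¹ • ∫ x in Omega2, f x * g x) := by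
  have h := parseval_conj (f := fun x => (starRingEnd ℂ) (f x)) (by fun_prop) hg
  simpa only [cf_conj, Complex.conj_conj] using h

lemma parseval_sq {f : ℝ × ℝ → ℝ} (hf : Continuous f) :
    HasSum (fun k => ‖fc f k‖^2) (((2*π)^2)⁻¹ * ∫ x in Omega2, f x ^ 2) := by
  have h := parseval_conj (f := fun x => (f x : ℂ)) (g := fun x => (f x : ℂ)) (by fun_prop)
    (by fun_prop)
  rw [← Complex.hasSum_ofReal]
  convert h using 1
  · ext k; rw [fc_eq_cf, ← Complex.normSq_eq_norm_sq, Complex.normSq_eq_conj_mul_self]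
  · simp only [Complex.conj_ofReal, Complex.real_smul, ← Complex.ofReal_mul]
    rw [integral_complex_ofReal]
    simp [sq]

/-! ### Fourier coefficients of derivatives -/

open scoped ContDiff in
/-- Smooth real functions on the plane that are `2π`-periodic in each coordinate. -/
structure SmPer (f : ℝ × ℝ → ℝ) : Prop where
  smooth : ContDiff ℝ ∞ f
  per1 : ∀ x y, f (x + 2*π, y) = f (x, y)
  per2 : ∀ x y, f (x, y + 2*π) = f (x, y)

lemma hasDerivAt_pd1 {f : ℝ × ℝ → ℝ} (hf : Differentiable ℝ f) (x y : ℝ) :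
    HasDerivAt (fun s => f (s, y)) (pd1 f (x, y)) x := by
  have h : DifferentiableAt ℝ (fun s => f (s, y)) x := by fun_prop
  exact h.hasDerivAt

lemma hasDerivAt_pd2 {f : ℝ × ℝ → ℝ} (hf : Differentiable ℝ f) (x y : ℝ) :
    HasDerivAt (fun s => f (x, s)) (pd2 f (x, y)) y := by
  have h : DifferentiableAt ℝ (fun s => f (x, s)) y := by fun_prop
  exact h.hasDerivAt

lemma pd1_eq_fderiv {f : ℝ × ℝ → ℝ} (hf : Differentiable ℝ f) :
    pd1 f = fun x => fderiv ℝ f x (1, 0) := by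
  ext ⟨x, y⟩
  refine (hasDerivAt_pd1 hf x y).unique ?_
  exact (hf (x, y)).hasFDerivAt.comp_hasDerivAt x ((hasDerivAt_id x).prodMk (hasDerivAt_const x y))

lemma pd2_eq_fderiv {f : ℝ × ℝ → ℝ} (hf : Differentiable ℝ f) :
    pd2 f = fun x => fderiv ℝ f x (0, 1) := by
  ext ⟨x, y⟩
  refine (hasDerivAt_pd2 hf x y).unique ?_
  exact (hf (x, y)).hasFDerivAt.comp_hasDerivAt y ((hasDerivAt_const y x).prodMk (hasDerivAt_id y))

namespace SmPer

lemma diff {f : ℝ × ℝ → ℝ} (hf : SmPer f) : Differentiable ℝ f :=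
  hf.smooth.differentiable (by simp)

lemma cont {f : ℝ × ℝ → ℝ} (hf : SmPer f) : Continuous f := hf.smooth.continuous

lemma pd1 {f : ℝ × ℝ → ℝ} (hf : SmPer f) : SmPer (pd1 f) where
  smooth := by
    rw [pd1_eq_fderiv hf.diff]
    exact (contDiff_infty_iff_fderiv.1 hf.smooth).2.clm_apply contDiff_const
  per1 x y := by
    simp only [_root_.pd1]
    rw [← deriv_comp_add_const]
    simp only [hf.per1]
  per2 x y := by simp only [_root_.pd1, hf.per2]

lemma pd2 {f : ℝ × ℝ → ℝ} (hf : SmPer f) : SmPer (pd2 f) where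
  smooth := by
    rw [pd2_eq_fderiv hf.diff]
    exact (contDiff_infty_iff_fderiv.1 hf.smooth).2.clm_apply contDiff_const
  per1 x y := by simp only [_root_.pd2, hf.per1]
  per2 x y := by
    simp only [_root_.pd2]
    rw [← deriv_comp_add_const]
    simp only [hf.per2]

end SmPer

lemma integral_deriv1_eq_zero {G G' : ℝ × ℝ → ℂ} (hG' : Continuous G')
    (hd : ∀ x y, HasDerivAt (fun s => G (s, y)) (G' (x, y)) x)
    (hper : ∀ y, G (2*π, y) = G (0, y)) : ∫ x in Omega2, G' x = 0 := by
  have hi := integrableOn_Omega2 hG'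
  rw [Omega2, Measure.volume_eq_prod, ← Measure.prod_restrict, integral_prod_symm]
  · refine integral_eq_zero_of_ae (Filter.Eventually.of_forall fun y => ?_)
    simp only [Pi.zero_apply]
    rw [integral_Icc_eq_integral_Ioc, ← intervalIntegral.integral_of_le (by positivity),
      intervalIntegral.integral_eq_sub_of_hasDerivAt (f := fun s => G (s, y))
        (fun x _ => hd x y) ((by fun_prop : Continuous fun s => G' (s, y)).intervalIntegrable _ _),
      hper, sub_self]
  · rwa [Measure.prod_restrict]

lemma integral_deriv2_eq_zero {G G' : ℝ × ℝ → ℂ} (hG' : Continuous G')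
    (hd : ∀ x y, HasDerivAt (fun s => G (x, s)) (G' (x, y)) y)
    (hper : ∀ x, G (x, 2*π) = G (x, 0)) : ∫ x in Omega2, G' x = 0 := by
  have hi := integrableOn_Omega2 hG'
  rw [Omega2, Measure.volume_eq_prod, ← Measure.prod_restrict, integral_prod]
  · refine integral_eq_zero_of_ae (Filter.Eventually.of_forall fun x => ?_)
    simp only [Pi.zero_apply]
    rw [integral_Icc_eq_integral_Ioc, ← intervalIntegral.integral_of_le (by positivity),
      intervalIntegral.integral_eq_sub_of_hasDerivAt (f := fun s => G (x, s))
        (fun y _ => hd x y) ((by fun_prop : Continuous fun s => G' (x, s)).intervalIntegrable _ _),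
      hper, sub_self]
  · rwa [Measure.prod_restrict]

lemma exp_int_two_pi (n : ℤ) : Complex.exp (Complex.I * (n * ((2*π : ℝ) : ℂ))) = 1 := by
  rw [← Complex.exp_int_mul_two_pi_mul_I n]; congr 1; push_cast; ring

lemma ee_per1 (k : ℤ × ℤ) (y : ℝ) : ee k (2*π, y) = ee k (0, y) := by
  simp only [ee, mul_add, Complex.exp_add, exp_int_two_pi]; simp

lemma ee_per2 (k : ℤ × ℤ) (x : ℝ) : ee k (x, 2*π) = ee k (x, 0) := by
  simp only [ee, mul_add, Complex.exp_add, exp_int_two_pi]; simp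

lemma hasDerivAt_ee1 (k : ℤ × ℤ) (x y : ℝ) :
    HasDerivAt (fun s : ℝ => ee k (s, y)) (Complex.I * k.1 * ee k (x, y)) x := by
  have h : HasDerivAt (fun s : ℝ => Complex.I * ((k.1:ℂ) * (s:ℂ) + (k.2:ℂ) * (y:ℂ)))
      (Complex.I * ((k.1:ℂ) * 1)) x :=
    (((Complex.ofRealCLM.hasDerivAt (x := x)).const_mul (k.1:ℂ)).add_const _).const_mul _
  have := h.cexp
  simp only [ee]; convert this using 1; ring

lemma hasDerivAt_ee2 (k : ℤ × ℤ) (x y : ℝ) :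
    HasDerivAt (fun s : ℝ => ee k (x, s)) (Complex.I * k.2 * ee k (x, y)) y := by
  have h : HasDerivAt (fun s : ℝ => Complex.I * ((k.1:ℂ) * (x:ℂ) + (k.2:ℂ) * (s:ℂ)))
      (Complex.I * ((k.2:ℂ) * 1)) y :=
    (((Complex.ofRealCLM.hasDerivAt (x := y)).const_mul (k.2:ℂ)).const_add _).const_mul _
  have := h.cexp
  simp only [ee]; convert this using 1; ring

lemma fc_pd1 {f : ℝ × ℝ → ℝ} (hf : SmPer f) (k : ℤ × ℤ) :
    fc (pd1 f) k = Complex.I * k.1 * fc f k := by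
  have hc := hf.cont
  have hc' := hf.pd1.cont
  have he := continuous_ee (-k)
  have h := integral_deriv1_eq_zero (G := fun x => (f x : ℂ) * ee (-k) x)
    (G' := fun x => (pd1 f x : ℂ) * ee (-k) x + (f x : ℂ) * (Complex.I * (-k).1 * ee (-k) x))
    (by fun_prop) (fun x y => ((hasDerivAt_pd1 hf.diff x y).ofReal_comp).mul (hasDerivAt_ee1 _ x y))
    (fun y => by
      have := hf.per1 0 y
      rw [zero_add] at this
      simp only [this, ee_per1])
  rw [integral_add (integrableOn_Omega2 (by fun_prop)) (integrableOn_Omega2 (by fun_prop))] at h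
  rw [fc_eq_cf, fc_eq_cf, cf, cf, eq_neg_of_add_eq_zero_left h, ← MeasureTheory.integral_neg,
    mul_smul_comm, ← MeasureTheory.integral_const_mul]
  congr 2; ext x; simp; ring

lemma fc_pd2 {f : ℝ × ℝ → ℝ} (hf : SmPer f) (k : ℤ × ℤ) :
    fc (pd2 f) k = Complex.I * k.2 * fc f k := by
  have hc := hf.cont
  have hc' := hf.pd2.cont
  have he := continuous_ee (-k)
  have h := integral_deriv2_eq_zero (G := fun x => (f x : ℂ) * ee (-k) x)
    (G' := fun x => (pd2 f x : ℂ) * ee (-k) x + (f x : ℂ) * (Complex.I * (-k).2 * ee (-k) x))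
    (by fun_prop) (fun x y => ((hasDerivAt_pd2 hf.diff x y).ofReal_comp).mul (hasDerivAt_ee2 _ x y))
    (fun x => by
      have := hf.per2 x 0
      rw [zero_add] at this
      simp only [this, ee_per2])
  rw [integral_add (integrableOn_Omega2 (by fun_prop)) (integrableOn_Omega2 (by fun_prop))] at h
  rw [fc_eq_cf, fc_eq_cf, cf, cf, eq_neg_of_add_eq_zero_left h, ← MeasureTheory.integral_neg,
    mul_smul_comm, ← MeasureTheory.integral_const_mul]
  congr 2; ext x; simp; ring

/-- `|ℓ|²` for a wavevector `ℓ`. -/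
def R (ℓ : ℤ × ℤ) : ℝ := (ℓ.1:ℝ)^2 + (ℓ.2:ℝ)^2

lemma fc_lap {f : ℝ × ℝ → ℝ} (hf : SmPer f) (k : ℤ × ℤ) :
    fc (lap f) k = -(R k : ℂ) * fc f k := by
  have h1 := hf.pd1.pd1.cont
  have h2 := hf.pd2.pd2.cont
  have he := continuous_ee (-k)
  have : fc (lap f) k = fc (pd1 (pd1 f)) k + fc (pd2 (pd2 f)) k := by
    simp only [fc_eq_cf, cf, lap, ← smul_add]
    rw [← integral_add (integrableOn_Omega2 (by fun_prop)) (integrableOn_Omega2 (by fun_prop))]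
    simp only [Complex.ofReal_add, add_mul]
  rw [this, fc_pd1 hf.pd1, fc_pd2 hf.pd2, fc_pd1 hf, fc_pd2 hf, R]
  push_cast
  linear_combination ((k.1:ℂ)^2 + (k.2:ℂ)^2) * fc f k * Complex.I_sq

/-- Parseval's identity for `Δf`. -/
lemma parseval_lap {f : ℝ × ℝ → ℝ} (hf : SmPer f) :
    HasSum (fun k => R k ^ 2 * ‖fc f k‖^2) (((2*π)^2)⁻¹ * ∫ x in Omega2, lap f x ^ 2) := by
  have hc : Continuous (lap f) := hf.pd1.pd1.cont.add hf.pd2.pd2.cont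
  convert parseval_sq hc using 2 with k
  rw [fc_lap hf, norm_mul, mul_pow, norm_neg, Complex.norm_real, Real.norm_eq_abs, sq_abs]

/-! ### Lattice sums -/

lemma R_nonneg (k : ℤ × ℤ) : 0 ≤ R k := by unfold R; positivity

lemma R_neg (k : ℤ × ℤ) : R (-k) = R k := by simp [R]

lemma one_le_R {k : ℤ × ℤ} (hk : k ≠ 0) : 1 ≤ R k := by
  have h : 1 ≤ k.1^2 + k.2^2 := by
    by_contra h
    have h1 : k.1 = 0 := by nlinarith [sq_nonneg k.1, sq_nonneg k.2]
    have h2 : k.2 = 0 := by nlinarith [sq_nonneg k.1, sq_nonneg k.2]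
    exact hk (Prod.ext h1 h2)
  unfold R; exact_mod_cast h

lemma R_add_le (p q : ℤ × ℤ) : R (p + q) ≤ 2 * (R p + R q) := by
  simp only [R, Prod.fst_add, Prod.snd_add]; push_cast
  nlinarith [sq_nonneg ((p.1:ℝ) - q.1), sq_nonneg ((p.2:ℝ) - q.2)]

lemma summable_weight {s : ℝ} (hs : 1 < s) :
    Summable fun q : ℤ × ℤ => (1 + ‖q‖) ^ (-(2*s)) := by
  have h := EisensteinSeries.summable_one_div_norm_rpow (k := 2*s) (by linarith)
  rw [← (finTwoArrowEquiv ℤ).symm.summable_iff] at h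
  refine Summable.of_norm_bounded_eventually h ?_
  filter_upwards [(Set.finite_singleton (0 : ℤ × ℤ)).compl_mem_cofinite] with q hq
  have hq0 : 0 < ‖q‖ := norm_pos_iff.2 hq
  have e : ‖(finTwoArrowEquiv ℤ).symm q‖ = ‖q‖ := by
    simp [Prod.norm_def, Pi.norm_def, Fin.univ_succ]
  simp only [Function.comp_def, e]
  rw [Real.norm_of_nonneg (by positivity)]
  exact Real.rpow_le_rpow_of_nonpos hq0 (by linarith) (by linarith)

/-- Tile the lattice by squares of side `M`. On the square of index `q = (⌊k₁/M⌋, ⌊k₂/M⌋)`, each `k`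
with `|k| ≥ M` satisfies `M (1 + ‖q‖) ≤ 3 |k|`, where `‖q‖` is the sup norm. -/
lemma weight_le {M : ℕ} (hM : 1 ≤ M) {s : ℝ} (hs : 1 < s) {k : ℤ × ℤ} (hk : (M:ℝ)^2 ≤ R k) :
    R k ^ (-s) ≤ ((M:ℝ)/3) ^ (-(2*s)) * (1 + ‖(k.1 / (M:ℤ), k.2 / (M:ℤ))‖) ^ (-(2*s)) := by
  have hM' : (1:ℝ) ≤ M := by exact_mod_cast hM
  have hMk : (M:ℝ) ≤ √(R k) := Real.le_sqrt_of_sq_le hk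
  have key (a : ℤ) (ha : |(a:ℝ)| ≤ √(R k)) : (M:ℝ) * ‖a / (M:ℤ)‖ ≤ 2 * √(R k) := by
    rw [Int.norm_eq_abs]
    have h1 : (M:ℤ) * (a / M) + a % M = a := Int.mul_ediv_add_emod a M
    have h2 : 0 ≤ a % (M:ℤ) := Int.emod_nonneg _ (by omega)
    have h3 : a % (M:ℤ) < M := Int.emod_lt_of_pos _ (by omega)
    have h1' : (M:ℝ) * ((a / (M:ℤ) : ℤ) : ℝ) + ((a % (M:ℤ) : ℤ) : ℝ) = a := by exact_mod_cast h1
    have h2' : (0:ℝ) ≤ ((a % (M:ℤ) : ℤ) : ℝ) := by exact_mod_cast h2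
    have h3' : ((a % (M:ℤ) : ℤ) : ℝ) < M := by exact_mod_cast h3
    rw [← abs_of_nonneg (by positivity : (0:ℝ) ≤ M), ← abs_mul]
    rw [abs_le] at ha ⊢
    constructor <;> linarith
  have ha1 : |(k.1:ℝ)| ≤ √(R k) := Real.abs_le_sqrt (by unfold R; nlinarith [sq_nonneg (k.2:ℝ)])
  have ha2 : |(k.2:ℝ)| ≤ √(R k) := Real.abs_le_sqrt (by unfold R; nlinarith [sq_nonneg (k.1:ℝ)])
  have hn : (M:ℝ) * ‖(k.1 / (M:ℤ), k.2 / (M:ℤ))‖ ≤ 2 * √(R k) := by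
    rw [Prod.norm_def]
    rcases max_choice ‖k.1 / (M:ℤ)‖ ‖k.2 / (M:ℤ)‖ with h | h <;> simp only [h]
    · exact key _ ha1
    · exact key _ ha2
  have e : R k ^ (-s) = (√(R k)) ^ (-(2*s)) := by
    rw [Real.sqrt_eq_rpow, ← Real.rpow_mul (R_nonneg k)]; congr 1; ring
  rw [e, ← Real.mul_rpow (by positivity) (by positivity)]
  exact Real.rpow_le_rpow_of_nonpos (by positivity) (by linarith) (by linarith)

lemma fiber_card {M : ℕ} (hM : 1 ≤ M) (S : Finset (ℤ × ℤ)) (q : ℤ × ℤ) :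
    (S.filter fun k => (k.1 / (M:ℤ), k.2 / (M:ℤ)) = q).card ≤ M^2 := by
  have hsub : (S.filter fun k => (k.1 / (M:ℤ), k.2 / (M:ℤ)) = q) ⊆
      Finset.Ico (M * q.1) (M * q.1 + M) ×ˢ Finset.Ico (M * q.2) (M * q.2 + M) := by
    have key (a b : ℤ) (h : a / (M:ℤ) = b) : M * b ≤ a ∧ a < M * b + M := by
      have h1 : (M:ℤ) * (a / M) + a % M = a := Int.mul_ediv_add_emod a M
      have h2 : 0 ≤ a % (M:ℤ) := Int.emod_nonneg _ (by omega)
      have h3 : a % (M:ℤ) < M := Int.emod_lt_of_pos _ (by omega)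
      rw [h] at h1
      constructor <;> linarith
    intro k hk
    simp only [Finset.mem_filter, Prod.ext_iff] at hk
    simp only [Finset.mem_product, Finset.mem_Ico]
    exact ⟨key _ _ hk.2.1, key _ _ hk.2.2⟩
  refine (Finset.card_le_card hsub).trans ?_
  simp [Finset.card_product, sq]

/-- Lattice tail estimate `∑_{|k| > N} |k|^{-2s} ≲ N^{2-2s}` for `s > 1`. The plane is tiled by
squares of side `M = ⌊N⌋`. Each of them holds `M²` lattice points, and `|k|` is at least a multiple
of `N (1 + ‖q‖)` on the square of index `q`, so a convergent sum over `q` remains. -/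
lemma tail_bound {s : ℝ} (hs : 1 < s) : ∃ T : ℝ, 0 < T ∧ ∀ N : ℝ, 1 ≤ N → ∀ S : Finset (ℤ × ℤ),
    (∀ k ∈ S, N^2 < R k) → ∑ k ∈ S, R k ^ (-s) ≤ T * N ^ (2 - 2*s) := by
  set W := ∑' q : ℤ × ℤ, (1 + ‖q‖) ^ (-(2*s)) with hW
  have hsum := summable_weight hs
  have hWpos : 0 < W := hsum.tsum_pos (fun q => by positivity) 0 (by simp)
  refine ⟨(1/3:ℝ) ^ (-(2*s)) * (1/2:ℝ)^(2-2*s) * W, by positivity, fun N hN S hS => ?_⟩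
  set M := ⌊N⌋₊ with hMdef
  have hM : 1 ≤ M := Nat.le_floor (by simpa using hN)
  have hM' : (1:ℝ) ≤ M := by exact_mod_cast hM
  have hMN : (M:ℝ) ≤ N := Nat.floor_le (by linarith)
  have hNM : N < M + 1 := Nat.lt_floor_add_one N
  set φ : ℤ × ℤ → ℤ × ℤ := fun k => (k.1 / (M:ℤ), k.2 / (M:ℤ)) with hφ
  calc ∑ k ∈ S, R k ^ (-s)
      ≤ ∑ k ∈ S, ((M:ℝ)/3) ^ (-(2*s)) * (1 + ‖φ k‖) ^ (-(2*s)) := by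
        refine Finset.sum_le_sum fun k hk => weight_le hM hs ?_
        have := hS k hk
        nlinarith
    _ = ((M:ℝ)/3) ^ (-(2*s)) * ∑ k ∈ S, (1 + ‖φ k‖) ^ (-(2*s)) := by rw [Finset.mul_sum]
    _ ≤ ((M:ℝ)/3) ^ (-(2*s)) * ((M:ℝ)^2 * W) := by
        refine mul_le_mul_of_nonneg_left ?_ (by positivity)
        rw [Finset.sum_comp (fun q : ℤ × ℤ => (1 + ‖q‖) ^ (-(2*s))) φ]
        calc _ ≤ ∑ q ∈ S.image φ, (M:ℝ)^2 * (1 + ‖q‖) ^ (-(2*s)) := by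
              refine Finset.sum_le_sum fun q _ => ?_
              rw [nsmul_eq_mul]
              refine mul_le_mul_of_nonneg_right ?_ (by positivity)
              exact_mod_cast fiber_card hM S q
          _ ≤ _ := by
              rw [← Finset.mul_sum]
              exact mul_le_mul_of_nonneg_left
                (hsum.sum_le_tsum _ (fun q _ => by positivity)) (by positivity)
    _ = (1/3:ℝ) ^ (-(2*s)) * W * (M:ℝ)^(2-2*s) := by
        rw [div_eq_mul_one_div, Real.mul_rpow (by positivity) (by positivity),
          show (2 - 2*s) = (2:ℕ) + -(2*s) by push_cast; ring,
          Real.rpow_add (by positivity), Real.rpow_natCast]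
        ring
    _ ≤ (1/3:ℝ) ^ (-(2*s)) * W * (1/2 * N)^(2-2*s) := by
        refine mul_le_mul_of_nonneg_left ?_ (by positivity)
        exact Real.rpow_le_rpow_of_nonpos (by linarith) (by linarith) (by linarith)
    _ = _ := by
        rw [Real.mul_rpow (by positivity) (by positivity)]; ring

/-- If `p` is the larger of two wavevectors with sum `k`, then `|k|^{2-α} ≤ 4 |p|² |q|^{-α}`: indeed
`|p| ≥ |k|/2`, and `|q|^{-α} ≥ |p|^{-α}`. -/
lemma high_low {α : ℝ} (h0 : 0 ≤ α) (h2 : α < 2) {p q : ℤ × ℤ} (hq : q ≠ 0)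
    (hk : p + q ≠ 0) (hpq : R q ≤ R p) :
    1 ≤ 4 * R (p + q) ^ (-(1 - α/2)) * (R p * R q ^ (-(α/2))) := by
  have hRq := one_le_R hq
  have hRp : 1 ≤ R p := hRq.trans hpq
  have hRk := one_le_R hk
  have hle : R (p + q) / 4 ≤ R p := by linarith [R_add_le p q]
  have e1 : R p * R p ^ (-(α/2)) = R p ^ (1 - α/2) := by
    rw [sub_eq_add_neg, Real.rpow_add (by linarith), Real.rpow_one]
  have e2 : R p ^ (-(α/2)) ≤ R q ^ (-(α/2)) :=
    Real.rpow_le_rpow_of_nonpos (by linarith) hpq (by linarith)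
  have e3 : (R (p + q) / 4) ^ (1 - α/2) ≤ R p ^ (1 - α/2) :=
    Real.rpow_le_rpow (by linarith) hle (by linarith)
  have e4 : R (p + q) ^ (1 - α/2) / 4 ≤ (R (p + q) / 4) ^ (1 - α/2) := by
    rw [Real.div_rpow (by linarith) (by norm_num)]
    have : (4:ℝ) ^ (1 - α/2) ≤ 4 ^ (1:ℝ) :=
      Real.rpow_le_rpow_of_exponent_le (by norm_num) (by linarith)
    rw [Real.rpow_one] at this
    exact div_le_div_of_nonneg_left (by positivity) (by positivity) this
  have e5 : R (p + q) ^ (1 - α/2) / 4 ≤ R p * R q ^ (-(α/2)) := by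
    have := mul_le_mul_of_nonneg_left e2 (by linarith : 0 ≤ R p)
    linarith
  rw [Real.rpow_neg (by linarith)]
  have hpos : 0 < R (p + q) ^ (1 - α/2) := by positivity
  rw [div_le_iff₀ (by norm_num)] at e5
  rw [mul_comm 4, mul_assoc, le_inv_mul_iff₀ hpos]
  linarith

/-- The bound `high_low` without an ordering of `p` and `q`; since `a 0 = 0`, neither of them needs
to be assumed nonzero. -/
lemma pointwise_conv {α : ℝ} (h0 : 0 ≤ α) (h2 : α < 2) {a : ℤ × ℤ → ℝ} (ha : ∀ k, 0 ≤ a k)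
    (ha0 : a 0 = 0) {p q : ℤ × ℤ} (hk : p + q ≠ 0) :
    a p * a q ≤ 4 * R (p + q) ^ (-(1 - α/2)) *
      ((R p * a p) * (R q ^ (-(α/2)) * a q) + (R q * a q) * (R p ^ (-(α/2)) * a p)) := by
  have hap := ha p
  have haq := ha q
  have hp0 := R_nonneg p
  have hq0 := R_nonneg q
  have hk0 := R_nonneg (p + q)
  have hrhs : 0 ≤ 4 * R (p + q) ^ (-(1 - α/2)) *
      ((R p * a p) * (R q ^ (-(α/2)) * a q) + (R q * a q) * (R p ^ (-(α/2)) * a p)) := by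
    positivity
  by_cases hp : p = 0
  · subst hp; rw [ha0, zero_mul]; rw [ha0] at hrhs; exact hrhs
  by_cases hq : q = 0
  · subst hq; rw [ha0, mul_zero]; rw [ha0] at hrhs; exact hrhs
  have haa : 0 ≤ a p * a q := by positivity
  have hn1 : 0 ≤ 4 * R (p + q) ^ (-(1 - α/2)) * ((R p * a p) * (R q ^ (-(α/2)) * a q)) := by
    positivity
  have hn2 : 0 ≤ 4 * R (p + q) ^ (-(1 - α/2)) * ((R q * a q) * (R p ^ (-(α/2)) * a p)) := by
    positivity
  rcases le_total (R q) (R p) with h | h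
  · have := mul_le_mul_of_nonneg_right (high_low h0 h2 hq hk h) haa
    linarith
  · rw [add_comm] at hk
    have := mul_le_mul_of_nonneg_right (high_low h0 h2 hp hk h) haa
    rw [add_comm q p] at this
    linarith

lemma sum_cs {ι : Type*} (S : Finset ι) {f g : ι → ℝ} {X Y : ℝ} (hX0 : 0 ≤ X) (hY0 : 0 ≤ Y)
    (hX : ∑ i ∈ S, f i ^ 2 ≤ X^2) (hY : ∑ i ∈ S, g i ^ 2 ≤ Y^2) : ∑ i ∈ S, f i * g i ≤ X * Y := by
  refine (Real.sum_mul_le_sqrt_mul_sqrt S f g).trans ?_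
  exact mul_le_mul (Real.sqrt_le_iff.2 ⟨hX0, hX⟩) (Real.sqrt_le_iff.2 ⟨hY0, hY⟩)
    (Real.sqrt_nonneg _) hX0

lemma rpow_half_sq {x : ℝ} (hx : 0 ≤ x) (β : ℝ) : (x ^ (β/2))^2 = x ^ β := by
  rw [← Real.rpow_natCast, ← Real.rpow_mul hx]; congr 1; push_cast; ring

/-- Estimate of `|k|^{2-α} ∑_{p+q=k} a_p a_q` by the product of the `Ḣ²` and `Ḣ^{-α}` norms:
the larger of `|p|`, `|q|` is at least `|k|/2` and receives the `Ḣ²` weight. -/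
lemma conv_bound {α : ℝ} (h0 : 0 ≤ α) (h2 : α < 2) {a : ℤ × ℤ → ℝ} (ha : ∀ k, 0 ≤ a k)
    (ha0 : a 0 = 0) {X Y : ℝ} (hX0 : 0 ≤ X) (hY0 : 0 ≤ Y)
    (hX : ∀ S : Finset (ℤ × ℤ), ∑ k ∈ S, R k ^ 2 * a k ^ 2 ≤ X^2)
    (hY : ∀ S : Finset (ℤ × ℤ), ∑ k ∈ S, R k ^ (-α) * a k ^ 2 ≤ Y^2)
    {k : ℤ × ℤ} (hk : k ≠ 0) (S : Finset (ℤ × ℤ)) :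
    ∑ m ∈ S, a (-m) * a (m + k) ≤ 8 * R k ^ (-(1 - α/2)) * (X * Y) := by
  have hX' (f : ℤ × ℤ → ℤ × ℤ) (hf : Function.Injective f) :
      ∑ m ∈ S, (R (f m) * a (f m))^2 ≤ X^2 := by
    have := hX (S.image f)
    rw [Finset.sum_image hf.injOn] at this
    simpa only [mul_pow] using this
  have hY' (f : ℤ × ℤ → ℤ × ℤ) (hf : Function.Injective f) :
      ∑ m ∈ S, (R (f m) ^ (-(α/2)) * a (f m))^2 ≤ Y^2 := by
    have := hY (S.image f)
    rw [Finset.sum_image hf.injOn] at this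
    simpa only [mul_pow, ← neg_div, rpow_half_sq (R_nonneg _)] using this
  have i1 : Function.Injective fun m : ℤ × ℤ => -m := neg_injective
  have i2 : Function.Injective fun m : ℤ × ℤ => m + k := add_left_injective k
  have c1 := sum_cs S hX0 hY0 (hX' _ i1) (hY' _ i2)
  have c2 := sum_cs S hX0 hY0 (hX' _ i2) (hY' _ i1)
  have hRk := R_nonneg k
  calc ∑ m ∈ S, a (-m) * a (m + k)
      ≤ ∑ m ∈ S, 4 * R k ^ (-(1 - α/2)) *
        ((R (-m) * a (-m)) * (R (m + k) ^ (-(α/2)) * a (m + k))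
          + (R (m + k) * a (m + k)) * (R (-m) ^ (-(α/2)) * a (-m))) := by
        refine Finset.sum_le_sum fun m _ => ?_
        have e : -m + (m + k) = k := by abel
        have := pointwise_conv h0 h2 ha ha0 (p := -m) (q := m + k) (by rwa [e])
        rwa [e] at this
    _ ≤ 4 * R k ^ (-(1 - α/2)) * (X * Y + X * Y) := by
        rw [← Finset.mul_sum, Finset.sum_add_distrib]
        exact mul_le_mul_of_nonneg_left (add_le_add c1 c2) (by positivity)
    _ = _ := by ring

/-! ### High-frequency pairings and the energy density -/

lemma norm_le_of_hasSum {E : Type*} [NormedAddCommGroup E] {f : ℤ × ℤ → E} {c : E} {B : ℝ}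
    (hf : HasSum f c) (hB : ∀ S : Finset (ℤ × ℤ), ∑ k ∈ S, ‖f k‖ ≤ B) : ‖c‖ ≤ B :=
  le_of_tendsto hf.norm (Filter.Eventually.of_forall fun S => (norm_sum_le S f).trans (hB S))

lemma cf_mul_ee (f : ℝ × ℝ → ℂ) (k m : ℤ × ℤ) :
    cf (fun x => f x * ee (-k) x) m = cf f (m + k) := by
  simp only [cf, neg_add, ee_add]
  congr 2; ext x; ring

/-- The Fourier coefficients of `f²` are the convolution of those of `f`. -/
lemma hasSum_fc_sq {f : ℝ × ℝ → ℝ} (hf : Continuous f) (k : ℤ × ℤ) :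
    HasSum (fun m => fc f (-m) * fc f (m + k)) (fc (fun x => f x ^ 2) k) := by
  have he := continuous_ee (-k)
  have h := parseval (f := fun x => (f x : ℂ)) (g := fun x => (f x : ℂ) * ee (-k) x)
    (by fun_prop) (by fun_prop)
  simp only [cf_mul_ee, ← fc_eq_cf] at h
  convert h using 1
  rw [fc_eq_cf, cf]
  congr 2; ext x; push_cast; ring

lemma finite_low (N : ℝ) : {k : ℤ × ℤ | R k ≤ N^2}.Finite := by
  refine ((Set.finite_Icc (-⌈|N|⌉) ⌈|N|⌉).prod (Set.finite_Icc (-⌈|N|⌉) ⌈|N|⌉)).subset ?_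
  have key (a : ℤ) (h : (a:ℝ)^2 ≤ N^2) : a ∈ Set.Icc (-⌈|N|⌉) ⌈|N|⌉ := by
    rw [mem_Icc, ← abs_le]
    have h1 : |(a:ℝ)| ≤ |N| := sq_le_sq.1 h
    have h2 : |(a:ℝ)| ≤ ⌈|N|⌉ := h1.trans (Int.le_ceil _)
    exact_mod_cast h2
  intro k hk
  simp only [mem_ofPred_eq, R] at hk
  exact ⟨key _ (by nlinarith [sq_nonneg (k.2:ℝ)]), key _ (by nlinarith [sq_nonneg (k.1:ℝ)])⟩

lemma PN_eq_sum (N : ℝ) (f : ℝ × ℝ → ℝ) (x : ℝ × ℝ) :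
    PN N f x = ∑ k ∈ (finite_low N).toFinset, (fc f k * ee k x).re := by
  rw [PN, tsum_eq_sum (s := (finite_low N).toFinset)]
  · refine Finset.sum_congr rfl fun k hk => ?_
    simp only [Finite.mem_toFinset, mem_ofPred_eq, R] at hk
    rw [if_pos hk]; rfl
  · intro k hk
    simp only [Finite.mem_toFinset, mem_ofPred_eq, R] at hk
    rw [if_neg hk]

lemma continuous_PN (N : ℝ) (f : ℝ × ℝ → ℝ) : Continuous (PN N f) := by
  have : PN N f = fun x => ∑ k ∈ (finite_low N).toFinset, (fc f k * ee k x).re :=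
    funext (PN_eq_sum N f)
  rw [this]
  refine continuous_finsetSum _ fun k _ => ?_
  have he := continuous_ee k
  exact Complex.continuous_re.comp (by fun_prop)

lemma integral_mode {h : ℝ × ℝ → ℝ} (hh : Continuous h) (c : ℂ) (k : ℤ × ℤ) :
    ((2*π)^2)⁻¹ * ∫ x in Omega2, (c * ee k x).re * h x = (fc h (-k) * c).re := by
  have he := continuous_ee k
  have e1 : ∀ x, (c * ee k x).re * h x = (c * ((h x : ℂ) * ee k x)).re := fun x => by
    rw [show c * ((h x : ℂ) * ee k x) = (c * ee k x) * (h x : ℂ) by ring, Complex.re_mul_ofReal]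
  simp only [e1]
  have e2 : ∫ x in Omega2, (c * ((h x : ℂ) * ee k x)).re
      = (∫ x in Omega2, c * ((h x : ℂ) * ee k x)).re :=
    integral_re (𝕜 := ℂ) (f := fun x => c * ((h x : ℂ) * ee k x)) (integrableOn_Omega2 (by fun_prop))
  rw [e2, MeasureTheory.integral_const_mul, ← Complex.re_ofReal_mul, fc_eq_cf, cf, neg_neg,
    Complex.real_smul]
  congr 1; ring

/-- Parseval's identity for the pairing of the high-frequency part of `f` with `h`. -/
lemma parseval_high (N : ℝ) {f h : ℝ × ℝ → ℝ} (hf : Continuous f) (hh : Continuous h) :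
    HasSum (fun k => if R k ≤ N^2 then 0 else (fc h (-k) * fc f k).re)
      (((2*π)^2)⁻¹ * ∫ x in Omega2, (f x - PN N f x) * h x) := by
  have hP := continuous_PN N f
  have h1 : HasSum (fun k => (fc h (-k) * fc f k).re) (((2*π)^2)⁻¹ * ∫ x in Omega2, f x * h x) := by
    have := Complex.hasSum_re (parseval (f := fun x => (h x : ℂ)) (g := fun x => (f x : ℂ))
      (by fun_prop) (by fun_prop))
    simp only [← fc_eq_cf] at this
    convert this using 1
    simp only [← Complex.ofReal_mul]
    rw [integral_complex_ofReal, Complex.real_smul, ← Complex.ofReal_mul, Complex.ofReal_re]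
    simp only [mul_comm]
  have h2 : HasSum (fun k => if R k ≤ N^2 then (fc h (-k) * fc f k).re else 0)
      (((2*π)^2)⁻¹ * ∫ x in Omega2, PN N f x * h x) := by
    have e : ((2*π)^2)⁻¹ * ∫ x in Omega2, PN N f x * h x
        = ∑ k ∈ (finite_low N).toFinset, if R k ≤ N^2 then (fc h (-k) * fc f k).re else 0 := by
      simp only [PN_eq_sum, Finset.sum_mul]
      rw [MeasureTheory.integral_finsetSum, Finset.mul_sum]
      · refine Finset.sum_congr rfl fun k hk => ?_
        simp only [Finite.mem_toFinset, mem_ofPred_eq] at hk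
        rw [if_pos hk, integral_mode hh]
      · intro k _
        have he := continuous_ee k
        exact integrableOn_Omega2 ((Complex.continuous_re.comp (by fun_prop)).mul hh)
    rw [e]
    refine hasSum_sum_of_ne_finset_zero fun k hk => ?_
    simp only [Finite.mem_toFinset, mem_ofPred_eq] at hk
    rw [if_neg hk]
  have e : ((2*π)^2)⁻¹ * ∫ x in Omega2, (f x - PN N f x) * h x
      = ((2*π)^2)⁻¹ * (∫ x in Omega2, f x * h x) - ((2*π)^2)⁻¹ * ∫ x in Omega2, PN N f x * h x := by
    rw [← mul_sub, ← integral_sub (integrableOn_Omega2 (by fun_prop))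
      (integrableOn_Omega2 (by fun_prop))]
    simp only [sub_mul]
  rw [e]
  exact (h1.sub h2).congr_fun fun k => by split_ifs <;> simp

/-- Bound for `∫ ((I - P_N)f) h`, to be used with `h = ∂ᵢg` and `ĝ_k` decaying like `|k|^{α-2}`:
then `|f̂_k| |ĥ_k| ≲ (|k|² |f̂_k|) |k|^{α-3}`, and the sum over `|k| > N` is estimated by
Cauchy–Schwarz and the lattice tail `hT`. -/
lemma high_sum_bound {α : ℝ} {T N : ℝ} (hT0 : 0 ≤ T) (hN : 1 ≤ N)
    (hT : ∀ S : Finset (ℤ × ℤ), (∀ k ∈ S, N^2 < R k) →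
      ∑ k ∈ S, R k ^ (-(3 - α)) ≤ T * N ^ (2 - 2*(3 - α)))
    {f h : ℝ × ℝ → ℝ} (hf : Continuous f) (hh : Continuous h) {X B : ℝ} (hX0 : 0 ≤ X) (hB0 : 0 ≤ B)
    (hX : ∀ S : Finset (ℤ × ℤ), ∑ k ∈ S, R k ^ 2 * ‖fc f k‖ ^ 2 ≤ X^2)
    (hB : ∀ k ≠ 0, ‖fc h (-k)‖ ≤ R k ^ (1/2 : ℝ) * (R k ^ (-(1 - α/2)) * B)) :
    |((2*π)^2)⁻¹ * ∫ x in Omega2, (f x - PN N f x) * h x|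
      ≤ B * (X * (√T * N ^ (-(2 - α)))) := by
  refine norm_le_of_hasSum (parseval_high N hf hh) fun S => ?_
  have hs : ∀ k, ‖(if R k ≤ N^2 then 0 else (fc h (-k) * fc f k).re : ℝ)‖
      = if N^2 < R k then |(fc h (-k) * fc f k).re| else 0 := fun k => by
    by_cases h : R k ≤ N^2
    · rw [if_pos h, if_neg (not_lt.2 h), norm_zero]
    · rw [if_neg h, if_pos (not_le.1 h), Real.norm_eq_abs]
  simp only [hs]
  rw [← Finset.sum_filter]
  set S' := S.filter fun k => N^2 < R k with hS'
  have hS'R : ∀ k ∈ S', N^2 < R k := fun k hk => (Finset.mem_filter.1 hk).2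
  calc ∑ k ∈ S', |(fc h (-k) * fc f k).re|
      ≤ ∑ k ∈ S', B * ((R k * ‖fc f k‖) * R k ^ (-(3 - α)/2)) := by
        refine Finset.sum_le_sum fun k hk => ?_
        have hRk : 0 < R k := lt_of_le_of_lt (sq_nonneg N) (hS'R k hk)
        have hk0 : k ≠ 0 := by rintro rfl; simp [R] at hRk
        refine (Complex.abs_re_le_norm _).trans ?_
        rw [norm_mul]
        refine (mul_le_mul_of_nonneg_right (hB k hk0) (norm_nonneg _)).trans (le_of_eq ?_)
        have e : R k ^ (1/2 : ℝ) * R k ^ (-(1 - α/2)) = R k * R k ^ (-(3 - α)/2) := by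
          conv_rhs => rw [← Real.rpow_one (R k), ← Real.rpow_mul hRk.le, ← Real.rpow_add hRk]
          rw [← Real.rpow_add hRk]; congr 1; ring
        linear_combination B * ‖fc f k‖ * e
    _ = B * ∑ k ∈ S', (R k * ‖fc f k‖) * R k ^ (-(3 - α)/2) := by rw [Finset.mul_sum]
    _ ≤ B * (X * (√T * N ^ (-(2 - α)))) := by
        refine mul_le_mul_of_nonneg_left (sum_cs S' hX0 (by positivity) ?_ ?_) hB0
        · simpa only [mul_pow] using hX S'
        · simp only [rpow_half_sq (R_nonneg _)]
          refine (hT S' hS'R).trans (le_of_eq ?_)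
          rw [mul_pow, Real.sq_sqrt hT0, ← Real.rpow_natCast, ← Real.rpow_mul (by linarith)]
          congr 2; push_cast; ring

/-- Kinetic energy density `½|u|²`. -/
def energy (f₁ f₂ : ℝ × ℝ → ℝ) (x : ℝ × ℝ) : ℝ := (f₁ x ^ 2 + f₂ x ^ 2) / 2

lemma SmPer.energy {f₁ f₂ : ℝ × ℝ → ℝ} (h₁ : SmPer f₁) (h₂ : SmPer f₂) : SmPer (energy f₁ f₂) where
  smooth := ((h₁.smooth.pow 2).add (h₂.smooth.pow 2)).div_const 2
  per1 x y := by simp only [_root_.energy, h₁.per1, h₂.per1]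
  per2 x y := by simp only [_root_.energy, h₁.per2, h₂.per2]

lemma pd1_energy {f₁ f₂ : ℝ × ℝ → ℝ} (h₁ : SmPer f₁) (h₂ : SmPer f₂) (x : ℝ × ℝ) :
    pd1 (energy f₁ f₂) x = f₁ x * pd1 f₁ x + f₂ x * pd1 f₂ x := by
  have h := ((((hasDerivAt_pd1 h₁.diff x.1 x.2).pow 2).add
    ((hasDerivAt_pd1 h₂.diff x.1 x.2).pow 2)).div_const 2).deriv
  refine Eq.trans h ?_
  simp only [Prod.mk.eta]; push_cast; ring

lemma pd2_energy {f₁ f₂ : ℝ × ℝ → ℝ} (h₁ : SmPer f₁) (h₂ : SmPer f₂) (x : ℝ × ℝ) :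
    pd2 (energy f₁ f₂) x = f₁ x * pd2 f₁ x + f₂ x * pd2 f₂ x := by
  have h := ((((hasDerivAt_pd2 h₁.diff x.1 x.2).pow 2).add
    ((hasDerivAt_pd2 h₂.diff x.1 x.2).pow 2)).div_const 2).deriv
  refine Eq.trans h ?_
  simp only [Prod.mk.eta]; push_cast; ring

lemma norm_fc_sq_le {α : ℝ} (h0 : 0 ≤ α) (h2 : α < 2) {f : ℝ × ℝ → ℝ} (hf : Continuous f)
    (hf0 : fc f 0 = 0) {X Y : ℝ} (hX0 : 0 ≤ X) (hY0 : 0 ≤ Y)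
    (hX : ∀ S : Finset (ℤ × ℤ), ∑ k ∈ S, R k ^ 2 * ‖fc f k‖ ^ 2 ≤ X^2)
    (hY : ∀ S : Finset (ℤ × ℤ), ∑ k ∈ S, R k ^ (-α) * ‖fc f k‖ ^ 2 ≤ Y^2)
    {k : ℤ × ℤ} (hk : k ≠ 0) :
    ‖fc (fun x => f x ^ 2) k‖ ≤ 8 * R k ^ (-(1 - α/2)) * (X * Y) := by
  refine norm_le_of_hasSum (hasSum_fc_sq hf k) fun S => ?_
  simp only [norm_mul]
  exact conv_bound h0 h2 (fun k => norm_nonneg (fc f k)) (by simp [hf0]) hX0 hY0 hX hY hk S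

lemma norm_fc_energy_le {α : ℝ} (h0 : 0 ≤ α) (h2 : α < 2) {f₁ f₂ : ℝ × ℝ → ℝ}
    (hf₁ : Continuous f₁) (hf₂ : Continuous f₂)
    (hf₁0 : fc f₁ 0 = 0) (hf₂0 : fc f₂ 0 = 0) {X Y : ℝ} (hX0 : 0 ≤ X) (hY0 : 0 ≤ Y)
    (hX₁ : ∀ S : Finset (ℤ × ℤ), ∑ k ∈ S, R k ^ 2 * ‖fc f₁ k‖ ^ 2 ≤ X^2)
    (hY₁ : ∀ S : Finset (ℤ × ℤ), ∑ k ∈ S, R k ^ (-α) * ‖fc f₁ k‖ ^ 2 ≤ Y^2)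
    (hX₂ : ∀ S : Finset (ℤ × ℤ), ∑ k ∈ S, R k ^ 2 * ‖fc f₂ k‖ ^ 2 ≤ X^2)
    (hY₂ : ∀ S : Finset (ℤ × ℤ), ∑ k ∈ S, R k ^ (-α) * ‖fc f₂ k‖ ^ 2 ≤ Y^2)
    {k : ℤ × ℤ} (hk : k ≠ 0) :
    ‖fc (energy f₁ f₂) k‖ ≤ R k ^ (-(1 - α/2)) * (8 * (X * Y)) := by
  have he := continuous_ee (-k)
  have e : fc (energy f₁ f₂) k
      = (1/2 : ℂ) * (fc (fun x => f₁ x ^ 2) k + fc (fun x => f₂ x ^ 2) k) := by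
    simp only [fc_eq_cf, cf, ← smul_add]
    rw [← integral_add (integrableOn_Omega2 (by fun_prop)) (integrableOn_Omega2 (by fun_prop)),
      mul_smul_comm, ← MeasureTheory.integral_const_mul]
    congr 2; ext x; simp only [energy]; push_cast; ring
  rw [e, norm_mul]
  have t := norm_add_le (fc (fun x => f₁ x ^ 2) k) (fc (fun x => f₂ x ^ 2) k)
  have b₁ := norm_fc_sq_le h0 h2 hf₁ hf₁0 hX0 hY0 hX₁ hY₁ hk
  have b₂ := norm_fc_sq_le h0 h2 hf₂ hf₂0 hX0 hY0 hX₂ hY₂ hk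
  have : ‖(1/2 : ℂ)‖ = 1/2 := by norm_num
  rw [this]
  linarith

/-! ### The trilinear estimate -/

lemma fc_zero_eq (f : ℝ × ℝ → ℝ) (h : ∫ x in Omega2, f x = 0) : fc f 0 = 0 := by
  have : fc f 0 = ((2*π)^2)⁻¹ • ((∫ x in Omega2, f x : ℝ) : ℂ) := by
    rw [fc, ← integral_complex_ofReal]; simp
  rw [this, h]; simp

lemma summable_hnorm {α : ℝ} (h0 : 0 ≤ α) {u : ℝ × ℝ → ℝ × ℝ} (h₁ : Continuous fun y => (u y).1)
    (h₂ : Continuous fun y => (u y).2) :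
    Summable fun ℓ : ℤ × ℤ =>
      if ℓ = 0 then 0 else ((ℓ.1:ℝ)^2 + (ℓ.2:ℝ)^2) ^ (-α) * coefAbsSq u ℓ := by
  refine Summable.of_nonneg_of_le (fun ℓ => ?_) (fun ℓ => ?_)
    ((parseval_sq h₁).summable.add (parseval_sq h₂).summable)
  · split_ifs
    · exact le_rfl
    · unfold coefAbsSq; positivity
  · split_ifs with h
    · positivity
    · have hR := one_le_R h
      refine mul_le_of_le_one_left (by unfold coefAbsSq; positivity) ?_
      exact Real.rpow_le_one_of_one_le_of_nonpos hR (by linarith)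

/-- Low-mode trilinear estimate: for each `α ∈ [0,2)` there is `C > 0` so
that for every `N ≥ 1` and every smooth 2π-periodic mean-free vector field `u`,
`|∫_Ω (((I−P_N)u)·∇u)·u| ≤ C N^{−(2−α)} ‖Δu‖²_{L²} ‖u‖_{Ḣ^{−α}}`. -/
theorem stmt10 :
    ∀ α : ℝ, α ∈ Set.Ico (0:ℝ) 2 →
      ∃ C : ℝ, 0 < C ∧
        ∀ N : ℝ, 1 ≤ N →
          ∀ u : ℝ × ℝ → ℝ × ℝ, (∀ n : ℕ, ContDiff ℝ n u) → Periodic2 u →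
            (∫ x in Omega2, u x) = 0 →
            |∫ x in Omega2,
                (adv (highN N u) (fun z => (u z).1) x * (u x).1
                  + adv (highN N u) (fun z => (u z).2) x * (u x).2)|
              ≤ C * N ^ (-(2 - α)) * l2sqLap u * hnorm u (-α) := by
  rintro α ⟨h0, h2⟩
  obtain ⟨T, hT0, hT⟩ := tail_bound (s := 3 - α) (by linarith)
  have hpi := Real.pi_pos
  refine ⟨16 * √T / (2*π), by positivity, fun N hN u hu hper hmean => ?_⟩
  have hu' := contDiff_infty.2 hu
  have s₁ : SmPer (fun y => (u y).1) :=
    ⟨hu'.fst, fun x y => by rw [(hper (x, y)).1], fun x y => by rw [(hper (x, y)).2]⟩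
  have s₂ : SmPer (fun y => (u y).2) :=
    ⟨hu'.snd, fun x y => by rw [(hper (x, y)).1], fun x y => by rw [(hper (x, y)).2]⟩
  set u₁ : ℝ × ℝ → ℝ := fun y => (u y).1 with hu₁
  set u₂ : ℝ × ℝ → ℝ := fun y => (u y).2 with hu₂
  have hui := integrableOn_Omega2 hu'.continuous
  have z₁ : fc u₁ 0 = 0 := fc_zero_eq _ (by rw [hu₁, ← fst_integral hui, hmean]; rfl)
  have z₂ : fc u₂ 0 = 0 := fc_zero_eq _ (by rw [hu₂, ← snd_integral hui, hmean]; rfl)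
  -- The norms on the right-hand side, without their factors of `2π`.
  set X := √(l2sqLap u) / (2*π) with hX
  set Y := hnorm u (-α) / (2*π) with hY
  have hX0 : 0 ≤ X := by positivity
  have hY0 : 0 ≤ Y := by unfold Y hnorm; positivity
  have hL0 : 0 ≤ l2sqLap u := integral_nonneg fun x => by positivity
  have hXsq : X^2 = ((2*π)^2)⁻¹ * l2sqLap u := by
    rw [hX, div_pow, Real.sq_sqrt hL0]; ring
  have hYsq : Y^2 = ∑' ℓ : ℤ × ℤ,
      if ℓ = 0 then 0 else ((ℓ.1:ℝ)^2 + (ℓ.2:ℝ)^2) ^ (-α) * coefAbsSq u ℓ := by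
    rw [hY, div_pow, hnorm, Real.sq_sqrt, hnormSq]
    · field_simp
    · refine mul_nonneg (by positivity) (tsum_nonneg fun ℓ => ?_)
      split_ifs
      · exact le_rfl
      · unfold coefAbsSq; positivity
  have hsum : HasSum (fun k => R k ^ 2 * ‖fc u₁ k‖^2 + R k ^ 2 * ‖fc u₂ k‖^2) (X^2) := by
    have hc₁ : Continuous (lap u₁) := s₁.pd1.pd1.cont.add s₁.pd2.pd2.cont
    have hc₂ : Continuous (lap u₂) := s₂.pd1.pd1.cont.add s₂.pd2.pd2.cont
    rw [hXsq, l2sqLap, integral_add (integrableOn_Omega2 (by fun_prop))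
      (integrableOn_Omega2 (by fun_prop)), mul_add]
    exact (parseval_lap s₁).add (parseval_lap s₂)
  have hXS (S : Finset (ℤ × ℤ)) :
      ∑ k ∈ S, (R k ^ 2 * ‖fc u₁ k‖^2 + R k ^ 2 * ‖fc u₂ k‖^2) ≤ X^2 :=
    sum_le_hasSum S (fun k _ => by positivity) hsum
  have hX₁ (S : Finset (ℤ × ℤ)) : ∑ k ∈ S, R k ^ 2 * ‖fc u₁ k‖^2 ≤ X^2 :=
    (Finset.sum_le_sum fun k _ => le_add_of_nonneg_right (by positivity)).trans (hXS S)
  have hX₂ (S : Finset (ℤ × ℤ)) : ∑ k ∈ S, R k ^ 2 * ‖fc u₂ k‖^2 ≤ X^2 :=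
    (Finset.sum_le_sum fun k _ => le_add_of_nonneg_left (by positivity)).trans (hXS S)
  have hYS (S : Finset (ℤ × ℤ)) :
      ∑ k ∈ S, (R k ^ (-α) * ‖fc u₁ k‖^2 + R k ^ (-α) * ‖fc u₂ k‖^2) ≤ Y^2 := by
    rw [hYsq]
    refine le_trans (le_of_eq ?_)
      ((summable_hnorm h0 s₁.cont s₂.cont).sum_le_tsum S fun ℓ _ => ?_)
    · refine Finset.sum_congr rfl fun k _ => ?_
      split_ifs with hk
      · simp [hk, z₁, z₂]
      · rw [← mul_add]; rfl
    · split_ifs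
      · exact le_rfl
      · unfold coefAbsSq; positivity
  have hRn (k) : 0 ≤ R k ^ (-α) := Real.rpow_nonneg (R_nonneg k) _
  have hY₁ (S : Finset (ℤ × ℤ)) : ∑ k ∈ S, R k ^ (-α) * ‖fc u₁ k‖^2 ≤ Y^2 :=
    (Finset.sum_le_sum fun k _ => le_add_of_nonneg_right
      (mul_nonneg (hRn k) (by positivity))).trans (hYS S)
  have hY₂ (S : Finset (ℤ × ℤ)) : ∑ k ∈ S, R k ^ (-α) * ‖fc u₂ k‖^2 ≤ Y^2 :=
    (Finset.sum_le_sum fun k _ => le_add_of_nonneg_left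
      (mul_nonneg (hRn k) (by positivity))).trans (hYS S)
  have sg := s₁.energy s₂
  have hg (k : ℤ × ℤ) (hk : k ≠ 0) :
      ‖fc (energy u₁ u₂) (-k)‖ ≤ R k ^ (-(1 - α/2)) * (8 * (X * Y)) := by
    have := norm_fc_energy_le h0 h2 s₁.cont s₂.cont z₁ z₂ hX0 hY0 hX₁ hY₁ hX₂ hY₂
      (k := -k) (neg_ne_zero.2 hk)
    rwa [R_neg] at this
  have b₁ := high_sum_bound hT0.le hN (hT N hN) s₁.cont sg.pd1.cont hX0
    (B := 8 * (X * Y)) (by positivity) hX₁ (fun k hk => by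
      rw [fc_pd1 sg, norm_mul]
      refine mul_le_mul ?_ (hg k hk) (norm_nonneg _) (Real.rpow_nonneg (R_nonneg k) _)
      rw [← Real.sqrt_eq_rpow, norm_mul, Complex.norm_I, one_mul, Complex.norm_intCast]
      exact Real.abs_le_sqrt (by simp only [R, Prod.fst_neg]; push_cast
                                 nlinarith [sq_nonneg (k.2:ℝ)]))
  have b₂ := high_sum_bound hT0.le hN (hT N hN) s₂.cont sg.pd2.cont hX0
    (B := 8 * (X * Y)) (by positivity) hX₂ (fun k hk => by
      rw [fc_pd2 sg, norm_mul]
      refine mul_le_mul ?_ (hg k hk) (norm_nonneg _) (Real.rpow_nonneg (R_nonneg k) _)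
      rw [← Real.sqrt_eq_rpow, norm_mul, Complex.norm_I, one_mul, Complex.norm_intCast]
      exact Real.abs_le_sqrt (by simp only [R, Prod.snd_neg]; push_cast
                                 nlinarith [sq_nonneg (k.1:ℝ)]))
  -- The integrand is `(I - P_N)u · ∇(½|u|²)`.
  have h_integral : ∫ x in Omega2, (adv (highN N u) u₁ x * (u x).1 + adv (highN N u) u₂ x * (u x).2)
      = (∫ x in Omega2, (u₁ x - PN N u₁ x) * pd1 (energy u₁ u₂) x)
        + ∫ x in Omega2, (u₂ x - PN N u₂ x) * pd2 (energy u₁ u₂) x := by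
    have c₁ := continuous_PN N u₁
    have c₂ := continuous_PN N u₂
    have d₁ := s₁.cont
    have d₂ := s₂.cont
    have e₁ := sg.pd1.cont
    have e₂ := sg.pd2.cont
    rw [← integral_add (integrableOn_Omega2 (by fun_prop)) (integrableOn_Omega2 (by fun_prop))]
    congr 1; ext x
    rw [pd1_energy s₁ s₂, pd2_energy s₁ s₂]
    simp only [adv, highN, PNvec, Prod.fst_sub, Prod.snd_sub, hu₁, hu₂]
    ring
  rw [h_integral]
  rw [abs_mul, abs_of_pos (by positivity), inv_mul_le_iff₀ (by positivity)] at b₁ b₂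
  refine (abs_add_le _ _).trans ((add_le_add b₁ b₂).trans (le_of_eq ?_))
  have hX2 : (2*π)^2 * X^2 = l2sqLap u := by rw [hXsq]; field_simp
  have hYe : hnorm u (-α) = Y * (2*π) := by rw [hY]; field_simp
  rw [hYe, ← hX2]
  field_simp
  ring
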